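/- Let l, m ≥ 0 and let (a_i,c_i), i=1..l, and (s_j,u_j), j=1..m, be positive integers with a_i/c_i = s_j/u_j = α ≥ 1 for all i,j, and set a = ∑a_i, s = ∑s_j, with a > s. Then for the central value k = k(x,n) = (αn/2)(1 + x/√n) with |x| ≤ n^{1/4-δ} (0<δ<1/4), the ratio ∏_i C(a_i n + b_i, c_i k + d_i) / ∏_j C(s_j n + t_j, u_j k + v_j) is asymptotically 2^{(a-s)n+(b-t)} · exp(-(a-s)x²/2) · √(S·(π/2)^{m-l}·n^{m-l}/A) uniformly in x as n → ∞, where A = ∏ a_i, S = ∏ s_j, b = ∑b_i, t = ∑t_j. In the special case l = m = 1 (parameters (a,b,c,d) and (s,t,u,v)): C(an+b, ck+d)/C(sn+t, uk+v) ~ 2^{(a-s)n+(b-t)}·exp(-(a-s)x²/2)·√(s/a). -/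

import Mathlib

open Real Filter Finset

/-- Binomial coefficient extended to real arguments via the Gamma function. -/
noncomputable def rchoose (y x : ℝ) : ℝ :=
  Real.Gamma (y + 1) / (Real.Gamma (x + 1) * Real.Gamma (y - x + 1))

/-!
Centre the binomial coefficient at half of its upper argument. By Stirling's formula,
`C(2M, M + t)` is governed by `M` times the entropy `(1 + p) log (1 + p) + (1 - p) log (1 - p)` at
`p = t / M`. This function is even, so it equals `p² + O(p⁴)`: the Gaussian factor is
`exp (-t² / M)` and the error `M p⁴` vanishes for `t = o(M^(3/4))`, which is the range
`x = o(n^(1/4))`. Shifting the arguments by constants only moves `M` and `t` by `O(1)`, so it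
changes the factor `2 ^ (2M)` and nothing else. Products and quotients follow since they preserve
asymptotic equivalence. Uniformity in `x` is convergence along a filter on the pairs `(n, x)`.
-/

open Topology Asymptotics

section IsEquivalent

variable {τ : Type*} {F : Filter τ} {f g : τ → ℝ}

theorem isEquivalent_exp_of_tendsto_sub (h : Tendsto (fun i => f i - g i) F (𝓝 0)) :
    (fun i => exp (f i)) ~[F] fun i => exp (g i) := by
  refine isEquivalent_of_tendsto_one ?_
  simpa [Function.comp_def, exp_sub] using! (continuous_exp.tendsto 0).comp h

theorem isEquivalent_of_tendsto_log_sub (hf : ∀ᶠ i in F, 0 < f i) (hg : ∀ᶠ i in F, 0 < g i)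
    (h : Tendsto (fun i => log (f i) - log (g i)) F (𝓝 0)) : f ~[F] g :=
  (isEquivalent_exp_of_tendsto_sub h).congr_left (hf.mono fun _ hi => exp_log hi)
    |>.congr_right (hg.mono fun _ hi => exp_log hi)

theorem isEquivalent_sqrt (h : f ~[F] g) : (fun i => √(f i)) ~[F] fun i => √(g i) := by
  obtain ⟨φ, hφ, hfg⟩ := h.exists_eq_mul
  refine isEquivalent_iff_exists_eq_mul.2 ⟨fun i => √(φ i), by simpa using hφ.sqrt, ?_⟩
  filter_upwards [hfg, hφ.eventually_const_lt one_pos] with i hi hφi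
  simp [hi, sqrt_mul hφi.le]

theorem isLittleO_rpow_rpow_atTop_of_lt {p q : ℝ} (h : p < q) :
    (fun y : ℝ => y ^ p) =o[atTop] fun y => y ^ q := by
  refine isLittleO_of_tendsto' ?_ ((tendsto_rpow_neg_atTop (sub_pos.2 h)).congr' ?_)
  · filter_upwards [eventually_gt_atTop 0] with y hy h0
    exact absurd h0 (rpow_pos_of_pos hy q).ne'
  · filter_upwards [eventually_gt_atTop 0] with y hy
    rw [neg_sub, rpow_sub hy]

theorem isLittleO_of_isLittleO_rpow (hg : Tendsto g F atTop) {p : ℝ} (hp : p < 1)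
    (h : f =o[F] fun i => g i ^ p) : f =o[F] g := by
  simpa [Function.comp_def] using
    h.trans ((isLittleO_rpow_rpow_atTop_of_lt hp).comp_tendsto hg)

end IsEquivalent

section Stirling

/-- Stirling's approximation to `log (Gamma (x + 1))`. -/
noncomputable def logStirling (x : ℝ) : ℝ :=
  x * log x - x + log (2 * π * x) / 2

theorem tendsto_log_factorial_sub_logStirling :
    Tendsto (fun n : ℕ => log n.factorial - logStirling n) atTop (𝓝 0) := by
  have hlim : Tendsto (fun n => log (Stirling.stirlingSeq n) - log √π) atTop (𝓝 0) := by
    simpa using (Stirling.tendsto_stirlingSeq_sqrt_pi.log (by positivity)).sub_const (log √π)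
  refine hlim.congr' ?_
  filter_upwards [eventually_gt_atTop 0] with n hn
  have hn' : (n : ℝ) ≠ 0 := by positivity
  rw [Stirling.log_stirlingSeq_formula, logStirling, log_sqrt pi_pos.le,
    log_div hn' (exp_ne_zero 1), log_exp, mul_assoc 2 π, mul_left_comm 2 π,
    log_mul pi_ne_zero (by positivity)]
  ring

theorem abs_log_Gamma_natCast_add_sub_le {n : ℕ} (hn : 1 ≤ n) {r : ℝ} (hr0 : 0 ≤ r) (hr1 : r ≤ 1) :
    |log (Gamma (n + r + 1)) - log n.factorial - r * log n| ≤ 1 / n := by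
  rcases hr0.eq_or_lt with rfl | hr
  · simp [Gamma_nat_eq_factorial]
  have hn0 : (0 : ℝ) < n := by positivity
  have hrec : ∀ {y : ℝ}, 0 < y → (log ∘ Gamma) (y + 1) = (log ∘ Gamma) y + log y := fun {y} hy => by
    simp only [Function.comp_apply]
    rw [Gamma_add_one hy.ne', log_mul hy.ne' (Gamma_pos_of_pos hy).ne', add_comm]
  have hupper := BohrMollerup.f_add_nat_le convexOn_log_Gamma hrec n.succ_ne_zero hr hr1
  have hlower := BohrMollerup.f_add_nat_ge convexOn_log_Gamma hrec (n := n + 1) (by lia) hr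
  simp only [Function.comp_apply, Nat.cast_succ, Gamma_nat_eq_factorial, add_sub_cancel_right,
    add_right_comm _ 1 r] at hupper hlower
  have hlog : log (n + 1) - log n ≤ 1 / n := by
    rw [← log_div (by positivity) hn0.ne', add_div, div_self hn0.ne']
    linarith [log_le_sub_one_of_pos (show 0 < 1 + 1 / (n : ℝ) by positivity)]
  have hgap : r * (log (n + 1) - log n) ≤ 1 / n :=
    (mul_le_of_le_one_left (sub_nonneg.2 (log_le_log hn0 (by linarith))) hr1).trans hlog
  rw [abs_of_nonneg (by linarith)]
  linarith

theorem abs_logStirling_add_sub_le {y r : ℝ} (hy : 0 < y) (hr0 : 0 ≤ r) (hr1 : r ≤ 1) :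
    |logStirling (y + r) - logStirling y - r * log y| ≤ 3 / 2 * (1 / y) := by
  have hyr : 0 < y + r := by positivity
  set q := (y + r) / y with hq
  have hq0 : 0 < q := by positivity
  have hdiff : logStirling (y + r) - logStirling y - r * log y = (y + r + 1 / 2) * log q - r := by
    rw [logStirling, logStirling, hq, log_div hyr.ne' hy.ne', log_mul (by positivity) hyr.ne',
      log_mul (by positivity) hy.ne']
    ring
  have hlower : 0 ≤ (y + r + 1 / 2) * log q - r := by
    have h : (y + r + 1 / 2) * (1 - q⁻¹) - r = r / (2 * (y + r)) := by
      rw [hq]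
      field_simp
      ring
    have := mul_le_mul_of_nonneg_left (one_sub_inv_le_log_of_pos hq0)
      (show 0 ≤ y + r + 1 / 2 by positivity)
    have : 0 ≤ r / (2 * (y + r)) := by positivity
    linarith
  have hupper : (y + r + 1 / 2) * log q - r ≤ 3 / 2 * (1 / y) := calc
    _ ≤ (y + r + 1 / 2) * (q - 1) - r := by gcongr; exact log_le_sub_one_of_pos hq0
    _ = r * (r + 1 / 2) * (1 / y) := by rw [hq]; field_simp; ring
    _ ≤ 3 / 2 * (1 / y) := by gcongr; nlinarith
  rwa [hdiff, abs_of_nonneg hlower]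

theorem tendsto_log_Gamma_add_one_sub_logStirling :
    Tendsto (fun x => log (Gamma (x + 1)) - logStirling x) atTop (𝓝 0) := by
  have hbound : Tendsto (fun n : ℕ => |log n.factorial - logStirling n| + 5 / 2 * (1 / (n : ℝ)))
      atTop (𝓝 0) := by
    simpa using tendsto_log_factorial_sub_logStirling.abs.add
      (tendsto_one_div_atTop_nhds_zero_nat.const_mul (5 / 2 : ℝ))
  refine squeeze_zero_norm' ?_ (hbound.comp tendsto_nat_floor_atTop)
  filter_upwards [eventually_ge_atTop 1] with x hx
  have hn : 1 ≤ ⌊x⌋₊ := Nat.le_floor (by simpa using hx)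
  set r := x - ⌊x⌋₊
  have hr0 : 0 ≤ r := sub_nonneg.2 (Nat.floor_le (by linarith))
  have hr1 : r ≤ 1 := by linarith [Nat.lt_floor_add_one x]
  have hx : x = ⌊x⌋₊ + r := by ring
  have hGamma := abs_le.1 (abs_log_Gamma_natCast_add_sub_le hn hr0 hr1)
  have hStirling := abs_le.1 (abs_logStirling_add_sub_le (Nat.cast_pos.2 hn) hr0 hr1)
  rw [← hx] at hGamma hStirling
  have := le_abs_self (log ⌊x⌋₊.factorial - logStirling ⌊x⌋₊)
  have := neg_abs_le (log ⌊x⌋₊.factorial - logStirling ⌊x⌋₊)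
  rw [norm_eq_abs, Function.comp_apply, abs_le]
  constructor <;> linarith

end Stirling

section Taylor

theorem isBigO_log_one_add_sub :
    (fun p : ℝ => log (1 + p) - (p - p ^ 2 / 2 + p ^ 3 / 3)) =O[𝓝 0] fun p => p ^ 4 := by
  have h := hasFPowerSeriesAt_log_one_add.isBigO_sub_partialSum_pow 4
  simp only [FormalMultilinearSeries.partialSum, sum_range_succ, range_zero, sum_empty,
    FormalMultilinearSeries.apply_eq_prod_smul_coeff, FormalMultilinearSeries.coeff_ofScalars,
    prod_const, card_univ, Fintype.card_fin, smul_eq_mul] at h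
  refine isBigO_norm_right.1 (h.congr (fun p => ?_) fun p => (norm_pow p 4).symm)
  push_cast
  ring_nf

theorem isBigO_entropy_sub_sq :
    (fun p : ℝ => (1 + p) * log (1 + p) + (1 - p) * log (1 - p) - p ^ 2) =O[𝓝 0]
      fun p => p ^ 4 := by
  have hbdd (ε : ℝ) : (fun p : ℝ => 1 + ε * p) =O[𝓝 0] fun _ => (1 : ℝ) :=
    (show Continuous fun p : ℝ => 1 + ε * p by fun_prop).continuousAt.isBigO_one ℝ
  have hneg : Tendsto (fun p : ℝ => -p) (𝓝 0) (𝓝 0) := by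
    simpa using continuous_neg.tendsto (0 : ℝ)
  have hplus := (hbdd 1).mul isBigO_log_one_add_sub
  have hminus := (hbdd (-1)).mul (isBigO_log_one_add_sub.comp_tendsto hneg)
  simp only [Function.comp_def, one_mul, Even.neg_pow (by decide : Even 4)] at hplus hminus
  have hrem : (fun p : ℝ => 2 / 3 * p ^ 4) =O[𝓝 0] fun p => p ^ 4 :=
    (isBigO_refl _ _).const_mul_left _
  refine ((hplus.add hminus).add hrem).congr_left fun p => ?_
  ring_nf

end Taylor

section LocalLimit

variable {τ : Type*} {F : Filter τ}

theorem logStirling_two_mul_sub_sub {M p : ℝ} (hM : 0 < M) (hp : |p| < 1) :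
    logStirling (2 * M) - logStirling (M * (1 + p)) - logStirling (M * (1 - p)) =
      2 * M * log 2 - log (π * M) / 2 - log (1 - p ^ 2) / 2
        - M * ((1 + p) * log (1 + p) + (1 - p) * log (1 - p)) := by
  obtain ⟨hp1, hp2⟩ := abs_lt.1 hp
  have hplus : 0 < 1 + p := by linarith
  have hminus : 0 < 1 - p := by linarith
  have hsq : log (1 - p ^ 2) = log (1 + p) + log (1 - p) := by
    rw [← log_mul hplus.ne' hminus.ne']
    ring_nf
  have hlog {q : ℝ} (hq : 0 < q) : logStirling (M * q) =
      M * q * (log M + log q) - M * q + (log 2 + log π + (log M + log q)) / 2 := by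
    rw [logStirling, log_mul hM.ne' hq.ne', log_mul (by positivity) (by positivity),
      log_mul two_ne_zero pi_ne_zero, log_mul hM.ne' hq.ne']
  rw [mul_comm 2 M, hlog two_pos, hlog hplus, hlog hminus, hsq, log_mul pi_ne_zero hM.ne']
  ring

variable {M t : τ → ℝ}

theorem tendsto_mul_div_pow_four (hM : Tendsto M F atTop)
    (ht : t =o[F] fun i => M i ^ (3 / 4 : ℝ)) :
    Tendsto (fun i => M i * (t i / M i) ^ 4) F (𝓝 0) := by
  refine (ht.pow four_pos).tendsto_div_nhds_zero.congr' ?_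
  filter_upwards [hM.eventually_gt_atTop 0] with i hi
  have hpow : (M i ^ (3 / 4 : ℝ)) ^ 4 = M i ^ 3 := by
    rw [← rpow_mul_natCast hi.le, ← rpow_natCast]
    norm_num
  rw [hpow]
  field_simp

theorem tendsto_logStirling_two_mul_sub_sub (hM : Tendsto M F atTop)
    (ht : t =o[F] fun i => M i ^ (3 / 4 : ℝ)) :
    Tendsto (fun i => logStirling (2 * M i) - logStirling (M i + t i) - logStirling (M i - t i)
      - (2 * M i * log 2 - log (π * M i) / 2 - t i ^ 2 / M i)) F (𝓝 0) := by
  have hp := (isLittleO_of_isLittleO_rpow hM (by norm_num) ht).tendsto_div_nhds_zero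
  have hlog : Tendsto (fun i => log (1 - (t i / M i) ^ 2) / 2) F (𝓝 0) := by
    simpa using (((hp.pow 2).const_sub 1).log (by norm_num)).div_const 2
  have hentropy := ((isBigO_refl M F).mul (isBigO_entropy_sub_sq.comp_tendsto hp)).trans_tendsto
    (tendsto_mul_div_pow_four hM ht)
  have hsum := (hlog.add hentropy).neg
  rw [add_zero, neg_zero] at hsum
  refine hsum.congr' ?_
  filter_upwards [hM.eventually_gt_atTop 0, hp.abs.eventually_lt_const (by simp : |(0 : ℝ)| < 1)]
    with i hi hpi
  have hplus : M i + t i = M i * (1 + t i / M i) := by field_simp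
  have hminus : M i - t i = M i * (1 - t i / M i) := by field_simp
  rw [hplus, hminus, logStirling_two_mul_sub_sub hi hpi]
  simp only [Function.comp_apply]
  field_simp
  ring

theorem rchoose_two_mul_isEquivalent (hM : Tendsto M F atTop)
    (ht : t =o[F] fun i => M i ^ (3 / 4 : ℝ)) :
    (fun i => rchoose (2 * M i) (M i + t i)) ~[F]
      fun i => 2 ^ (2 * M i) / √(π * M i) * exp (-(t i ^ 2 / M i)) := by
  have htM := isLittleO_of_isLittleO_rpow hM (by norm_num) ht
  have hY : Tendsto (fun i => 2 * M i) F atTop := hM.const_mul_atTop two_pos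
  have hX : Tendsto (fun i => M i + t i) F atTop :=
    (IsEquivalent.refl.add_isLittleO htM).symm.tendsto_atTop hM
  have hZ : Tendsto (fun i => M i - t i) F atTop :=
    (IsEquivalent.refl.sub_isLittleO htM).symm.tendsto_atTop hM
  have hlim := (((tendsto_log_Gamma_add_one_sub_logStirling.comp hY).sub
    (tendsto_log_Gamma_add_one_sub_logStirling.comp hX)).sub
    (tendsto_log_Gamma_add_one_sub_logStirling.comp hZ)).add
    (tendsto_logStirling_two_mul_sub_sub hM ht)
  simp only [Function.comp_apply, sub_zero, add_zero] at hlim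
  have hGamma : ∀ᶠ i in F, 0 < Gamma (2 * M i + 1) ∧ 0 < Gamma (M i + t i + 1) ∧
      0 < Gamma (2 * M i - (M i + t i) + 1) := by
    filter_upwards [hY.eventually_ge_atTop 0, hX.eventually_ge_atTop 0,
      hZ.eventually_ge_atTop 0] with i hYi hXi hZi
    exact ⟨Gamma_pos_of_pos (by linarith), Gamma_pos_of_pos (by linarith),
      Gamma_pos_of_pos (by linarith)⟩
  refine isEquivalent_of_tendsto_log_sub ?_ ?_ (hlim.congr' ?_)
  · filter_upwards [hGamma] with i ⟨hYi, hXi, hZi⟩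
    exact div_pos hYi (mul_pos hXi hZi)
  · filter_upwards [hM.eventually_gt_atTop 0] with i hi
    positivity
  · filter_upwards [hGamma, hM.eventually_gt_atTop 0] with i ⟨hYi, hXi, hZi⟩ hi
    rw [rchoose, log_div hYi.ne' (mul_pos hXi hZi).ne', log_mul hXi.ne' hZi.ne',
      log_mul (by positivity) (exp_ne_zero _), log_div (by positivity) (by positivity),
      log_rpow two_pos, log_exp, log_sqrt (by positivity),
      show 2 * M i - (M i + t i) = M i - t i by ring]
    ring

variable {n x : τ → ℝ}

theorem const_isLittleO_rpow (hn : Tendsto n F atTop) (e : ℝ) {p : ℝ} (hp : 0 < p) :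
    (fun _ => e) =o[F] fun i => n i ^ p :=
  isLittleO_const_left.2 <|
    .inr (tendsto_norm_atTop_atTop.comp ((tendsto_rpow_atTop hp).comp hn))

theorem sqrt_mul_isLittleO_rpow (hn : Tendsto n F atTop)
    (hx : x =o[F] fun i => n i ^ (1 / 4 : ℝ)) :
    (fun i => √(n i) * x i) =o[F] fun i => n i ^ (3 / 4 : ℝ) := by
  refine ((isBigO_refl (fun i => √(n i)) F).mul_isLittleO hx).congr' .rfl ?_
  filter_upwards [hn.eventually_gt_atTop 0] with i hi
  rw [sqrt_eq_rpow, ← rpow_add hi]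
  norm_num

theorem sq_isLittleO (hn : Tendsto n F atTop) (hx : x =o[F] fun i => n i ^ (1 / 4 : ℝ)) :
    (fun i => x i ^ 2) =o[F] n := by
  refine isLittleO_of_isLittleO_rpow hn (p := 1 / 2) (by norm_num) <|
    (hx.pow two_pos).congr' .rfl ?_
  filter_upwards [hn.eventually_gt_atTop 0] with i hi
  rw [← rpow_mul_natCast hi.le]
  norm_num

theorem mul_add_const_isEquivalent (hn : Tendsto n F atTop) {a : ℝ} (ha : 0 < a) (b : ℝ) :
    (fun i => a * n i + b) ~[F] fun i => a * n i :=
  IsEquivalent.refl.add_const_of_norm_tendsto_atTop <|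
    tendsto_norm_atTop_atTop.comp (hn.const_mul_atTop ha)

theorem tendsto_sq_div_sub (hn : Tendsto n F atTop) (hx : x =o[F] fun i => n i ^ (1 / 4 : ℝ))
    {a : ℝ} (ha : 0 < a) (b e : ℝ) :
    Tendsto (fun i => (a / 2 * (√(n i) * x i) + e) ^ 2 / ((a * n i + b) / 2) - a * x i ^ 2 / 2)
      F (𝓝 0) := by
  have hden := mul_add_const_isEquivalent hn ha b
  have hsqrt := isLittleO_of_isLittleO_rpow hn (by norm_num) (sqrt_mul_isLittleO_rpow hn hx)
  have hconst : (fun _ => 2 * e ^ 2) =o[F] n :=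
    (const_isLittleO_rpow hn (2 * e ^ 2) one_pos).congr_right fun i => rpow_one (n i)
  have hnum : (fun i => 2 * a * e * (√(n i) * x i) + 2 * e ^ 2 - a * b / 2 * x i ^ 2) =o[F] n :=
    ((hsqrt.const_mul_left _).add hconst).sub ((sq_isLittleO hn hx).const_mul_left _)
  have hn_den : n =O[F] fun i => a * n i + b :=
    (isBigO_self_const_mul ha.ne' n F).trans hden.isBigO_symm
  refine (hnum.trans_isBigO hn_den).tendsto_div_nhds_zero.congr' ?_
  filter_upwards [hn.eventually_gt_atTop 0,
    (hden.symm.tendsto_atTop (hn.const_mul_atTop ha)).eventually_gt_atTop 0] with i hi hdi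
  have hsq := sq_sqrt hi.le
  rw [div_div_eq_mul_div, div_sub_div _ _ hdi.ne' two_ne_zero,
    div_eq_div_iff hdi.ne' (by positivity)]
  linear_combination (-(a * n i + b) * a ^ 2 * x i ^ 2) * hsq

theorem rchoose_isEquivalent_gaussian (hn : Tendsto n F atTop)
    (hx : x =o[F] fun i => n i ^ (1 / 4 : ℝ)) {a : ℝ} (ha : 0 < a) (b d : ℝ) :
    (fun i => rchoose (a * n i + b) (a * n i / 2 * (1 + x i / √(n i)) + d)) ~[F]
      fun i => 2 ^ (a * n i + b) / √(π * (a * n i / 2)) * exp (-(a * x i ^ 2 / 2)) := by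
  set M : τ → ℝ := fun i => (a * n i + b) / 2 with hM_def
  set t : τ → ℝ := fun i => a / 2 * (√(n i) * x i) + (d - b / 2) with ht_def
  have hMn : M ~[F] fun i => a * n i / 2 := (mul_add_const_isEquivalent hn ha b).div .refl
  have hM : Tendsto M F atTop :=
    hMn.symm.tendsto_atTop ((hn.const_mul_atTop ha).atTop_div_const two_pos)
  have hn_le_M : n =O[F] M :=
    ((isBigO_self_const_mul (half_pos ha).ne' n F).congr_right fun i => by ring).trans
      hMn.isBigO_symm
  have ht : t =o[F] fun i => M i ^ (3 / 4 : ℝ) :=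
    (((sqrt_mul_isLittleO_rpow hn hx).const_mul_left _).add
      (const_isLittleO_rpow hn _ (by norm_num))).trans_isBigO
      (hn_le_M.rpow (by norm_num) (hM.eventually_ge_atTop 0))
  have hsqrt : (fun i => √(π * M i)) ~[F] fun i => √(π * (a * n i / 2)) :=
    isEquivalent_sqrt (IsEquivalent.refl.mul hMn)
  have hexp : (fun i => exp (-(t i ^ 2 / M i))) ~[F] fun i => exp (-(a * x i ^ 2 / 2)) :=
    isEquivalent_exp_of_tendsto_sub <| by
      simpa only [neg_zero, neg_sub', neg_sub_neg] using
        (tendsto_sq_div_sub hn hx ha b (d - b / 2)).neg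
  have htwo : ∀ i, 2 * M i = a * n i + b := fun i => by simp only [hM_def]; ring
  have hcentre : ∀ i, M i + t i = a * n i / 2 * (1 + x i / √(n i)) + d := fun i => by
    have := div_sqrt (x := n i)
    simp only [hM_def, ht_def]
    linear_combination (-(a * x i / 2)) * this
  have hcentral := (rchoose_two_mul_isEquivalent hM ht).trans
    ((IsEquivalent.refl.div hsqrt).mul hexp)
  simp only [htwo, hcentre] at hcentral
  exact hcentral

end LocalLimit

section Products

theorem prod_gaussian {ι : Type*} [Fintype ι] {a : ι → ℝ} (ha : ∀ i, 0 ≤ a i) (b : ι → ℝ)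
    {n : ℝ} (hn : 0 ≤ n) (x : ℝ) :
    ∏ i, ((2 : ℝ) ^ (a i * n + b i) / √(π * (a i * n / 2)) * exp (-(a i * x ^ 2 / 2))) =
      2 ^ ((∑ i, a i) * n + ∑ i, b i) / √((∏ i, a i) * (π / 2 * n) ^ Fintype.card ι) *
        exp (-((∑ i, a i) * x ^ 2 / 2)) := by
  have hsqrt : ∏ i, √(π * (a i * n / 2)) = √((∏ i, a i) * (π / 2 * n) ^ Fintype.card ι) := by
    rw [← sqrt_prod _ fun i _ => by have := ha i; positivity, ← card_univ, ← prod_const,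
      ← prod_mul_distrib]
    exact congrArg sqrt (prod_congr rfl fun i _ => by ring)
  rw [prod_mul_distrib, prod_div_distrib, ← rpow_sum_of_pos two_pos, ← exp_sum, hsqrt,
    sum_add_distrib, sum_mul, sum_neg_distrib, sum_mul, sum_div]

theorem gaussian_div_gaussian {A S B T P Q n x : ℝ} (hQ : 0 ≤ Q) (hn : 0 < n)
    (l m : ℕ) :
    2 ^ (A * n + B) / √(P * (π / 2 * n) ^ l) * exp (-(A * x ^ 2 / 2)) /
        (2 ^ (S * n + T) / √(Q * (π / 2 * n) ^ m) * exp (-(S * x ^ 2 / 2))) =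
      2 ^ ((A - S) * n + (B - T)) * exp (-(A - S) * x ^ 2 / 2) *
        √(Q * (π / 2) ^ ((m : ℝ) - l) * n ^ ((m : ℝ) - l) / P) := by
  have hpow : (2 : ℝ) ^ ((A - S) * n + (B - T)) = 2 ^ (A * n + B) / 2 ^ (S * n + T) := by
    rw [← rpow_sub two_pos]
    ring_nf
  have hexp : exp (-(A - S) * x ^ 2 / 2) = exp (-(A * x ^ 2 / 2)) / exp (-(S * x ^ 2 / 2)) := by
    rw [← exp_sub]
    ring_nf
  have hsqrt : √(Q * (π / 2) ^ ((m : ℝ) - l) * n ^ ((m : ℝ) - l) / P) =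
      √(Q * (π / 2 * n) ^ m) / √(P * (π / 2 * n) ^ l) := by
    rw [← sqrt_div (by positivity), mul_assoc Q, ← mul_rpow (by positivity) hn.le,
      rpow_sub (by positivity), rpow_natCast, rpow_natCast]
    congr 1
    field_simp
  rw [hpow, hexp, hsqrt]
  field_simp

variable {τ : Type*} {F : Filter τ} {n x : τ → ℝ} {ι κ : Type*} [Fintype ι] [Fintype κ]
  {a c : ι → ℝ} {s u : κ → ℝ} {α : ℝ}

theorem prod_rchoose_isEquivalent (hn : Tendsto n F atTop)
    (hx : x =o[F] fun i => n i ^ (1 / 4 : ℝ)) (ha : ∀ i, 0 < a i) (hac : ∀ i, α * c i = a i)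
    (b d : ι → ℝ) :
    (fun z => ∏ i, rchoose (a i * n z + b i) (c i * (α * n z / 2 * (1 + x z / √(n z))) + d i)) ~[F]
      fun z => 2 ^ ((∑ i, a i) * n z + ∑ i, b i) /
        √((∏ i, a i) * (π / 2 * n z) ^ Fintype.card ι) * exp (-((∑ i, a i) * x z ^ 2 / 2)) := by
  refine (IsEquivalent.finsetProd fun i (_ : i ∈ univ) =>
    rchoose_isEquivalent_gaussian hn hx (ha i) (b i) (d i)).congr_left ?_ |>.congr_right ?_
  · refine .of_forall fun z => prod_congr rfl fun i _ => ?_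
    simp only [← hac i]
    ring_nf
  · filter_upwards [hn.eventually_ge_atTop 0] with z hz
    exact prod_gaussian (fun i => (ha i).le) b hz (x z)

theorem tendsto_prod_rchoose_div_prod_rchoose (hn : Tendsto n F atTop)
    (hx : x =o[F] fun i => n i ^ (1 / 4 : ℝ)) (ha : ∀ i, 0 < a i) (hs : ∀ j, 0 < s j)
    (hac : ∀ i, α * c i = a i) (hsu : ∀ j, α * u j = s j) (b d : ι → ℝ) (t v : κ → ℝ) :
    Tendsto (fun z =>
      ((∏ i, rchoose (a i * n z + b i) (c i * (α * n z / 2 * (1 + x z / √(n z))) + d i)) /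
        ∏ j, rchoose (s j * n z + t j) (u j * (α * n z / 2 * (1 + x z / √(n z))) + v j)) /
      (2 ^ ((∑ i, a i - ∑ j, s j) * n z + (∑ i, b i - ∑ j, t j)) *
        exp (-(∑ i, a i - ∑ j, s j) * x z ^ 2 / 2) *
        √((∏ j, s j) * (π / 2) ^ ((Fintype.card κ : ℝ) - Fintype.card ι) *
          n z ^ ((Fintype.card κ : ℝ) - Fintype.card ι) / ∏ i, a i))) F (𝓝 1) := by
  have hP : 0 < ∏ i, a i := prod_pos fun i _ => ha i
  have hQ : 0 < ∏ j, s j := prod_pos fun j _ => hs j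
  have hratio := (prod_rchoose_isEquivalent hn hx ha hac b d).div
    (prod_rchoose_isEquivalent hn hx hs hsu t v)
  refine (isEquivalent_iff_tendsto_one ?_).1 (hratio.congr_right ?_)
  · filter_upwards [hn.eventually_gt_atTop 0] with z hz
    positivity
  · filter_upwards [hn.eventually_gt_atTop 0] with z hz
    exact gaussian_div_gaussian hQ.le hz _ _

end Products

section Uniformity

/-- The pairs `(n, x)` with `n → ∞` and `|x| ≤ w n`: a limit along this filter is a limit as
`n → ∞` that is uniform in the `x` of this window. -/
def centralWindow (w : ℝ → ℝ) : Filter (ℝ × ℝ) :=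
  (atTop ×ˢ ⊤) ⊓ 𝓟 {z | |z.2| ≤ w z.1}

variable {w : ℝ → ℝ}

theorem eventually_centralWindow {p : ℝ × ℝ → Prop} :
    (∀ᶠ z in centralWindow w, p z) ↔ ∀ᶠ n in atTop, ∀ x, |x| ≤ w n → p (n, x) := by
  rw [centralWindow, eventually_inf_principal, prod_top, eventually_comap]
  exact eventually_congr <| .of_forall fun n =>
    ⟨fun h x hx => h (n, x) rfl hx, by rintro h _ rfl; exact h _⟩

theorem tendsto_fst_centralWindow : Tendsto Prod.fst (centralWindow w) atTop :=
  tendsto_fst.mono_left inf_le_left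

theorem snd_isLittleO_centralWindow {g : ℝ → ℝ} (hw : w =o[atTop] g) :
    Prod.snd =o[centralWindow w] fun z => g z.1 := by
  refine IsBigO.trans_isLittleO (.of_bound' ?_) (hw.comp_tendsto tendsto_fst_centralWindow)
  exact eventually_centralWindow.2 (.of_forall fun n x hx => hx.trans (le_abs_self _))

end Uniformity

theorem local_limit_binomials_general {ι κ : Type*} [Fintype ι] [Fintype κ]
    {a b c d : ι → ℝ} {s t u v : κ → ℝ} (ha : ∀ i, 0 < a i) (hs : ∀ j, 0 < s j)
    {α : ℝ} (hac : ∀ i, α * c i = a i) (hsu : ∀ j, α * u j = s j)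
    {w : ℝ → ℝ} (hw : w =o[atTop] fun n => n ^ (1 / 4 : ℝ)) {ε : ℝ} (hε : 0 < ε) :
    ∀ᶠ n : ℝ in atTop, ∀ x, |x| ≤ w n →
      |((∏ i, rchoose (a i * n + b i) (c i * (α * n / 2 * (1 + x / √n)) + d i)) /
          ∏ j, rchoose (s j * n + t j) (u j * (α * n / 2 * (1 + x / √n)) + v j)) /
        (2 ^ ((∑ i, a i - ∑ j, s j) * n + (∑ i, b i - ∑ j, t j)) *
          exp (-(∑ i, a i - ∑ j, s j) * x ^ 2 / 2) *
          √((∏ j, s j) * (π / 2) ^ ((Fintype.card κ : ℝ) - Fintype.card ι) *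
            n ^ ((Fintype.card κ : ℝ) - Fintype.card ι) / ∏ i, a i)) - 1| ≤ ε :=
  eventually_centralWindow.1 <|
    (tendsto_prod_rchoose_div_prod_rchoose tendsto_fst_centralWindow
      (snd_isLittleO_centralWindow hw) ha hs hac hsu b d t v).eventually
      (Metric.closedBall_mem_nhds 1 hε)

/-- Local limit theorem for ratios of products of binomial coefficients: for
`k = (αn/2)(1 + x/√n)` with `|x| ≤ n^{1/4-δ}`, the ratio
`∏ C(aᵢn+bᵢ, cᵢk+dᵢ)/∏ C(sⱼn+tⱼ, uⱼk+vⱼ)` is asymptotic, uniformly in `x`, to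
`2^{(a-s)n+(b-t)}·exp(-(a-s)x²/2)·√(S·(π/2)^{m-l}·n^{m-l}/A)`. -/
theorem local_limit_binomials
    (l m : ℕ) (a c : Fin l → ℕ) (b d : Fin l → ℤ)
    (s u : Fin m → ℕ) (t v : Fin m → ℤ)
    (ha : ∀ i, 0 < a i) (hc : ∀ i, 0 < c i)
    (hs : ∀ j, 0 < s j) (hu : ∀ j, 0 < u j)
    (α : ℝ) (hα : 1 ≤ α)
    (hac : ∀ i, (a i : ℝ) / (c i : ℝ) = α)
    (hsu : ∀ j, (s j : ℝ) / (u j : ℝ) = α)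
    (hgt : ∑ j, s j < ∑ i, a i)
    (δ : ℝ) (hδ0 : 0 < δ) (hδ1 : δ < 1/4) :
    ∀ ε > 0, ∃ N : ℕ, ∀ n : ℕ, N ≤ n → ∀ x : ℝ,
      |x| ≤ (n : ℝ) ^ ((1 : ℝ)/4 - δ) →
      |((∏ i, rchoose ((a i : ℝ) * n + (b i : ℝ))
            ((c i : ℝ) * (α * n / 2 * (1 + x / Real.sqrt n)) + (d i : ℝ))) /
          (∏ j, rchoose ((s j : ℝ) * n + (t j : ℝ))
            ((u j : ℝ) * (α * n / 2 * (1 + x / Real.sqrt n)) + (v j : ℝ)))) /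
        ((2 : ℝ) ^ (((∑ i, (a i : ℝ)) - ∑ j, (s j : ℝ)) * n
              + ((∑ i, (b i : ℝ)) - ∑ j, (t j : ℝ))) *
          Real.exp (-((∑ i, (a i : ℝ)) - ∑ j, (s j : ℝ)) * x ^ 2 / 2) *
          Real.sqrt ((∏ j, (s j : ℝ)) * (π / 2) ^ ((m : ℝ) - l) *
            (n : ℝ) ^ ((m : ℝ) - l) / (∏ i, (a i : ℝ)))) - 1| ≤ ε := by
  intro ε hε
  have hw : (fun n : ℝ => n ^ ((1 : ℝ) / 4 - δ)) =o[atTop] fun n => n ^ (1 / 4 : ℝ) :=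
    isLittleO_rpow_rpow_atTop_of_lt (sub_lt_self _ hδ0)
  simpa only [Fintype.card_fin] using eventually_atTop.1 <|
    tendsto_natCast_atTop_atTop.eventually <| local_limit_binomials_general
      (b := fun i => (b i : ℝ)) (d := fun i => (d i : ℝ)) (t := fun j => (t j : ℝ))
      (v := fun j => (v j : ℝ)) (fun i => Nat.cast_pos.2 (ha i)) (fun j => Nat.cast_pos.2 (hs j))
      (fun i => (div_eq_iff (Nat.cast_pos.2 (hc i)).ne').1 (hac i) |>.symm)
      (fun j => (div_eq_iff (Nat.cast_pos.2 (hu j)).ne').1 (hsu j) |>.symm) hw hε
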